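/- Let μ, δ, c ∈ ℝ and 0 < ρ < 1, and let e^{μ,δ}_{1,ρ}(z) = Σ_{n=0}^∞ z^n/(Γ(n+μ)·Γ(δ−ρn)). Then for every z > 0 the function z ↦ z^{μ−1}·e^{μ,δ}_{1,ρ}(c·z) is differentiable and (d/dz)( z^{μ−1}·e^{μ,δ}_{1,ρ}(c·z) ) = z^{μ−2}·e^{μ−1,δ}_{1,ρ}(c·z). -/

import Mathlib

/- The Wright-type function `e^{μ,δ}_{1,ρ}(z) = Σ_{n≥0} zⁿ/(Γ(n+μ)·Γ(δ−ρn))`;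
`Real.Gamma` vanishes at nonpositive integers, realizing the convention `1/Γ = 0` there. -/
noncomputable def wrightE (ρ μ δ z : ℝ) : ℝ :=
  ∑' n : ℕ, z ^ n / (Real.Gamma ((n : ℝ) + μ) * Real.Gamma (δ - ρ * n))

open Filter Topology Set

/-- Reflection bound for the reciprocal Gamma function. -/
lemma abs_inv_Gamma_le {s : ℝ} (hs : s < 1) :
    |(Real.Gamma s)⁻¹| ≤ Real.Gamma (1 - s) := by
  have hpos : 0 < Real.Gamma (1 - s) := Real.Gamma_pos_of_pos (by linarith)
  by_cases h0 : Real.Gamma s = 0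
  · simpa [h0] using hpos.le
  have hrefl := Real.Gamma_mul_Gamma_one_sub s
  have hsin : Real.sin (Real.pi * s) ≠ 0 := by
    intro h
    rw [h, div_zero] at hrefl
    exact (mul_ne_zero h0 hpos.ne') hrefl
  have hinv : (Real.Gamma s)⁻¹ = Real.Gamma (1 - s) * (Real.sin (Real.pi * s) / Real.pi) := by
    rw [eq_div_iff hsin] at hrefl
    rw [← mul_div_assoc, inv_eq_iff_eq_inv, inv_div, eq_div_iff (mul_ne_zero hpos.ne' hsin)]
    linarith
  rw [hinv, abs_mul, abs_of_pos hpos]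
  refine mul_le_of_le_one_right hpos.le ?_
  rw [abs_div, abs_of_pos Real.pi_pos, div_le_one Real.pi_pos]
  linarith [Real.abs_sin_le_one (Real.pi * s), Real.pi_gt_three]

/-- Log-convexity bounds `Γ (a + ρ n)` by a power of `Γ (n + μ)`. -/
lemma exists_Gamma_add_mul_le_rpow {ρ : ℝ} (hρ0 : 0 < ρ) (hρ1 : ρ < 1) (a μ : ℝ) :
    ∃ C : ℝ, ∀ᶠ n : ℕ in atTop,
      Real.Gamma (a + ρ * n) ≤ Real.Gamma (n + μ) ^ ρ * C := by
  set t : ℝ := max 1 ((a - ρ * μ) / (1 - ρ))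
  have ht0 : 0 < t := lt_of_lt_of_le one_pos (le_max_left _ _)
  have hta : a ≤ ρ * μ + (1 - ρ) * t := by
    have h : (a - ρ * μ) / (1 - ρ) ≤ t := le_max_right _ _
    rw [div_le_iff₀ (by linarith)] at h
    linarith
  refine ⟨Real.Gamma t ^ (1 - ρ), ?_⟩
  have hlarge : Tendsto (fun n : ℕ => a + ρ * (n : ℝ)) atTop atTop :=
    tendsto_atTop_add_const_left _ _ (tendsto_natCast_atTop_atTop.const_mul_atTop hρ0)
  have hlarge' : Tendsto (fun n : ℕ => (n : ℝ) + μ) atTop atTop :=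
    tendsto_atTop_add_const_right _ _ tendsto_natCast_atTop_atTop
  filter_upwards [hlarge.eventually_ge_atTop 2, hlarge'.eventually_gt_atTop 0] with n h2 hpos
  calc Real.Gamma (a + ρ * n) ≤ Real.Gamma (ρ * (n + μ) + (1 - ρ) * t) :=
        Real.Gamma_strictMonoOn_Ici.monotoneOn h2 (by simp only [mem_Ici]; linarith) (by linarith)
    _ ≤ _ := Real.Gamma_mul_add_mul_le_rpow_Gamma_mul_rpow_Gamma hpos ht0 hρ0 (by linarith)
        (by ring)

lemma summable_pow_mul_Gamma_rpow_neg {R σ : ℝ} (hR : 0 < R) (hσ : 0 < σ) (μ : ℝ) :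
    Summable fun n : ℕ => R ^ n * Real.Gamma (n + μ) ^ (-σ) := by
  have hlarge : Tendsto (fun n : ℕ => (n : ℝ) + μ) atTop atTop :=
    tendsto_atTop_add_const_right _ _ tendsto_natCast_atTop_atTop
  refine summable_of_ratio_test_tendsto_lt_one (l := 0) one_pos ?_ ?_
  · filter_upwards [hlarge.eventually_gt_atTop 0] with n hn
    have := Real.Gamma_pos_of_pos hn
    positivity
  · have hlim : Tendsto (fun n : ℕ => R * ((n : ℝ) + μ) ^ (-σ)) atTop (𝓝 0) := by
      simpa using ((tendsto_rpow_neg_atTop hσ).comp hlarge).const_mul R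
    refine hlim.congr' ?_
    filter_upwards [hlarge.eventually_gt_atTop 0] with n hn
    have hΓ := Real.Gamma_pos_of_pos hn
    have hstep : Real.Gamma (((n + 1 : ℕ) : ℝ) + μ) = (n + μ) * Real.Gamma (n + μ) := by
      rw [← Real.Gamma_add_one hn.ne']
      push_cast
      ring_nf
    rw [hstep, Real.mul_rpow hn.le hΓ.le, Real.norm_of_nonneg (by positivity),
      Real.norm_of_nonneg (by positivity)]
    have := Real.rpow_pos_of_pos hΓ (-σ)
    rw [pow_succ]
    field_simp

/-- The series defining `wrightE` converges absolutely everywhere. -/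
lemma summable_norm_wrightE_term {ρ : ℝ} (hρ0 : 0 < ρ) (hρ1 : ρ < 1) (μ δ : ℝ) {R : ℝ}
    (hR : 0 < R) :
    Summable fun n : ℕ => ‖R ^ n / (Real.Gamma ((n : ℝ) + μ) * Real.Gamma (δ - ρ * n))‖ := by
  obtain ⟨C, hC⟩ := exists_Gamma_add_mul_le_rpow hρ0 hρ1 (1 - δ) μ
  have hsum := (summable_pow_mul_Gamma_rpow_neg hR (sub_pos.2 hρ1) μ).mul_right C
  refine Summable.norm (Summable.of_norm_bounded_eventually_nat (E := ℝ) hsum ?_)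
  have hlarge : Tendsto (fun n : ℕ => (1 - δ) + ρ * (n : ℝ)) atTop atTop :=
    tendsto_atTop_add_const_left _ _ (tendsto_natCast_atTop_atTop.const_mul_atTop hρ0)
  have hlarge' : Tendsto (fun n : ℕ => (n : ℝ) + μ) atTop atTop :=
    tendsto_atTop_add_const_right _ _ tendsto_natCast_atTop_atTop
  filter_upwards [hC, hlarge.eventually_gt_atTop 0, hlarge'.eventually_gt_atTop 0]
    with n hn h1 hpos
  have hΓ := Real.Gamma_pos_of_pos hpos
  have hrefl := abs_inv_Gamma_le (s := δ - ρ * n) (by linarith)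
  rw [show 1 - (δ - ρ * n) = 1 - δ + ρ * n by ring] at hrefl
  calc ‖R ^ n / (Real.Gamma (n + μ) * Real.Gamma (δ - ρ * n))‖
      = R ^ n * (Real.Gamma (n + μ))⁻¹ * |(Real.Gamma (δ - ρ * n))⁻¹| := by
        rw [div_eq_mul_inv, mul_inv, ← mul_assoc, norm_mul, Real.norm_of_nonneg (by positivity),
          Real.norm_eq_abs]
    _ ≤ R ^ n * (Real.Gamma (n + μ))⁻¹ * (Real.Gamma (n + μ) ^ ρ * C) := by
        gcongr
        exact hrefl.trans hn
    _ = R ^ n * Real.Gamma (n + μ) ^ (-(1 - ρ)) * C := by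
        rw [neg_sub, Real.rpow_sub_one hΓ.ne']
        ring

lemma div_Gamma_eq_inv_Gamma_sub_one (s : ℝ) :
    (s - 1) / Real.Gamma s = (Real.Gamma (s - 1))⁻¹ := by
  by_cases h : s - 1 = 0
  · simp [h]
  · have hs := Real.Gamma_add_one h
    rw [sub_add_cancel] at hs
    rw [hs, div_mul_eq_div_div, div_self h, one_div]

lemma hasDerivAt_rpow_mul_wrightE_term (μ δ c ρ : ℝ) (n : ℕ) {w : ℝ} (hw : 0 < w) :
    HasDerivAt
      (fun w : ℝ => w ^ (μ - 1) *
        ((c * w) ^ n / (Real.Gamma ((n : ℝ) + μ) * Real.Gamma (δ - ρ * n))))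
      (w ^ (μ - 2) *
        ((c * w) ^ n / (Real.Gamma ((n : ℝ) + (μ - 1)) * Real.Gamma (δ - ρ * n)))) w := by
  have hpow : HasDerivAt (fun w : ℝ => (c * w) ^ n) (n * (c * w) ^ (n - 1) * c) w := by
    simpa using ((hasDerivAt_id w).const_mul c).fun_pow n
  have hrpow : HasDerivAt (fun w : ℝ => w ^ (μ - 1)) ((μ - 1) * w ^ (μ - 2)) w := by
    convert Real.hasDerivAt_rpow_const (p := μ - 1) (Or.inl hw.ne') using 3
    ring
  refine (hrpow.mul (hpow.div_const _)).congr_deriv ?_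
  have hshift : w ^ (μ - 1) = w ^ (μ - 2) * w := by
    rw [← Real.rpow_add_one hw.ne']
    ring_nf
  have hn : w * (n * (c * w) ^ (n - 1) * c) = n * (c * w) ^ n := by
    rcases n with _ | n
    · simp
    · rw [Nat.add_sub_cancel, pow_succ]
      ring
  have hΓ := div_Gamma_eq_inv_Gamma_sub_one ((n : ℝ) + μ)
  rw [add_sub_assoc] at hΓ
  rw [hshift]
  simp only [div_eq_mul_inv, mul_inv] at hΓ ⊢
  rw [← hΓ]
  linear_combination w ^ (μ - 2) * (Real.Gamma (n + μ))⁻¹ * (Real.Gamma (δ - ρ * n))⁻¹ * hn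

/- STATEMENT 10: third differentiation formula in (3.2):
`(d/dz)( z^{μ−1}·e^{μ,δ}_{1,ρ}(c·z) ) = z^{μ−2}·e^{μ−1,δ}_{1,ρ}(c·z)` for `z > 0`. -/
theorem wright_power_deriv (μ δ c ρ : ℝ) (hρ0 : 0 < ρ) (hρ1 : ρ < 1)
    (z : ℝ) (hz : 0 < z) :
    HasDerivAt (fun w : ℝ => w ^ (μ - 1) * wrightE ρ μ δ (c * w))
      (z ^ (μ - 2) * wrightE ρ (μ - 1) δ (c * z)) z := by
  simp only [wrightE, ← tsum_mul_left]
  have hR : 0 < |c| * (2 * z) + 1 := by positivity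
  have hle : ∀ w ∈ Ioo (z / 2) (2 * z), |c * w| ≤ |c| * (2 * z) + 1 := by
    intro w hw
    have hw0 : 0 < w := lt_trans (by positivity) hw.1
    rw [abs_mul, abs_of_pos hw0]
    nlinarith [abs_nonneg c, hw.2]
  have hterm : ∀ (ν : ℝ) (n : ℕ), ∀ w ∈ Ioo (z / 2) (2 * z),
      ‖(c * w) ^ n / (Real.Gamma ((n : ℝ) + ν) * Real.Gamma (δ - ρ * n))‖ ≤
        ‖(|c| * (2 * z) + 1) ^ n / (Real.Gamma ((n : ℝ) + ν) * Real.Gamma (δ - ρ * n))‖ := by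
    intro ν n w hw
    rw [norm_div, norm_div, norm_pow, norm_pow, Real.norm_eq_abs (c * w),
      Real.norm_of_nonneg hR.le]
    gcongr
    exact hle w hw
  obtain ⟨M, hM⟩ := isCompact_Icc.exists_bound_of_continuousOn
    (f := fun w : ℝ => w ^ (μ - 2)) (s := Icc (z / 2) (2 * z))
    (fun w hw => (Real.continuousAt_rpow_const _ _
      (Or.inl (lt_of_lt_of_le (by positivity) hw.1).ne')).continuousWithinAt)
  have hzmem : z ∈ Ioo (z / 2) (2 * z) := ⟨by linarith, by linarith⟩
  refine hasDerivAt_tsum_of_isPreconnected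
    ((summable_norm_wrightE_term hρ0 hρ1 (μ - 1) δ hR).mul_left M) isOpen_Ioo
    isPreconnected_Ioo
    (fun n w hw => hasDerivAt_rpow_mul_wrightE_term μ δ c ρ n (lt_trans (by positivity) hw.1))
    (fun n w hw => ?_) hzmem ?_ hzmem
  · have hMw := hM w (Ioo_subset_Icc_self hw)
    rw [norm_mul]
    exact mul_le_mul hMw (hterm _ n w hw) (norm_nonneg _) ((norm_nonneg _).trans hMw)
  · exact (Summable.of_norm_bounded (summable_norm_wrightE_term hρ0 hρ1 μ δ hR)
      fun n => hterm μ n z hzmem).mul_left _
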